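/- arXiv:2012.02239 — 2 statements merged into one kernel-verified Lean document; each statement's English description precedes it below -/
import Mathlib

section
/- Let a, b ∈ R^m be nonzero with 𝔰(a) = 𝔰(b) and lc(a) = lc(b), and let G ⊆ R^m be a signature Gröbner basis up to 𝔰(a). If both a and b are regular s-irreducible modulo G, then ‾a = ‾b. -/
namespace SigGB

noncomputable section

/-- Power-products in `n` indeterminates, written additively as exponent vectors
(so the power-product `1` is `0`, and multiplication of power-products is `+`). -/
abbrev PP (n : ℕ) : Type := Fin n →₀ ℕ

/-- Terms: a power-product together with a component index (`t·e_i ↝ (t, i)`). -/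
abbrev Term (n m : ℕ) : Type := PP n × Fin m

/-- Multiplication of a term by a power-product: `t ⊗ (s·e_i) = (t·s)·e_i`. -/
def mulTerm {n m : ℕ} (t : PP n) (u : Term n m) : Term n m := (t + u.1, u.2)

/-- Divisibility of terms: `u ∣ v` iff `v = t ⊗ u` for some power-product `t`. -/
def termDvd {n m : ℕ} (u v : Term n m) : Prop := ∃ t : PP n, v = mulTerm t u

/-- Componentwise lcm of power-products. -/
noncomputable def lcmPP {n : ℕ} (s t : PP n) : PP n := Finsupp.zipWith max (max_self 0) s t

/-- Strict part of a relation. -/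
def strict {α : Type*} (r : α → α → Prop) (x y : α) : Prop := r x y ∧ x ≠ y

/-- `ple` is an admissible order on power-products and `tle` is a compatible
linear order on terms. -/
structure OrdersOK {n m : ℕ} (ple : PP n → PP n → Prop)
    (tle : Term n m → Term n m → Prop) : Prop where
  ple_refl : ∀ t, ple t t
  ple_trans : ∀ s t u, ple s t → ple t u → ple s u
  ple_antisymm : ∀ s t, ple s t → ple t s → s = t
  ple_total : ∀ s t, ple s t ∨ ple t s
  ple_one_le : ∀ t, ple 0 t
  ple_mul : ∀ (t s₁ s₂ : PP n), ple s₁ s₂ → ple (t + s₁) (t + s₂)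
  tle_refl : ∀ u, tle u u
  tle_trans : ∀ u v w, tle u v → tle v w → tle u w
  tle_antisymm : ∀ u v, tle u v → tle v u → u = v
  tle_total : ∀ u v, tle u v ∨ tle v u
  tle_mul : ∀ (t : PP n) (u v : Term n m), tle u v → tle (mulTerm t u) (mulTerm t v)
  tle_compat : ∀ (s t : PP n) (i j : Fin m), ple s t → i ≤ j → tle (s, i) (t, j)

variable {K : Type*} [Field K] {n m : ℕ} [NeZero m]

variable (f : Fin m → MvPolynomial (Fin n) K)
variable (ple : PP n → PP n → Prop)
variable (tle : Term n m → Term n m → Prop)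

/-- The module homomorphism `R^m → R` determined by `e_i ↦ f i`, i.e. `a ↦ ‾a`. -/
def bar (a : Fin m → MvPolynomial (Fin n) K) : MvPolynomial (Fin n) K := ∑ i, a i * f i

/-- Multiplication of a module element by a coefficient `c` and a power-product `t`. -/
noncomputable def monomMul (c : K) (t : PP n) (a : Fin m → MvPolynomial (Fin n) K) :
    Fin m → MvPolynomial (Fin n) K :=
  fun i => MvPolynomial.monomial t c * a i

/-- The coefficient of a term in a module element. -/
def coeffM (a : Fin m → MvPolynomial (Fin n) K) (u : Term n m) : K :=
  MvPolynomial.coeff u.1 (a u.2)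

open Classical in
/-- Leading power-product of a polynomial w.r.t. `ple`
(junk value `0`, i.e. the power-product `1`, for the zero polynomial). -/
noncomputable def lp (p : MvPolynomial (Fin n) K) : PP n :=
  if h : ∃ t, MvPolynomial.coeff t p ≠ 0 ∧ ∀ s, MvPolynomial.coeff s p ≠ 0 → ple s t
  then h.choose else 0

/-- Leading coefficient of a polynomial w.r.t. `ple`. -/
noncomputable def lc (p : MvPolynomial (Fin n) K) : K := MvPolynomial.coeff (lp ple p) p

open Classical in
/-- Signature of a module element: its `tle`-largest term with nonzero coefficient
(junk value for `0`). -/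
noncomputable def sig (a : Fin m → MvPolynomial (Fin n) K) : Term n m :=
  if h : ∃ u, coeffM a u ≠ 0 ∧ ∀ v, coeffM a v ≠ 0 → tle v u
  then h.choose else ((0 : PP n), (0 : Fin m))

/-- Leading coefficient of a module element. -/
noncomputable def lcM (a : Fin m → MvPolynomial (Fin n) K) : K := coeffM a (sig tle a)

/-- One-step s-reduction of `a` to `b` modulo `G`, witnessed by `g ∈ G` and the
power-product `t`. -/
def RedStepWith (G : Set (Fin m → MvPolynomial (Fin n) K))
    (a b g : Fin m → MvPolynomial (Fin n) K) (t : PP n) : Prop :=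
  g ∈ G ∧ bar f g ≠ 0 ∧
    MvPolynomial.coeff (t + lp ple (bar f g)) (bar f a) ≠ 0 ∧
    b = a - monomMul (MvPolynomial.coeff (t + lp ple (bar f g)) (bar f a) / lc ple (bar f g)) t g ∧
    tle (mulTerm t (sig tle g)) (sig tle a)

/-- The step witnessed by `g` and `t` is regular: `t ⊗ 𝔰(g) ≺_t 𝔰(a)`. -/
def RegularWith (a g : Fin m → MvPolynomial (Fin n) K) (t : PP n) : Prop :=
  strict tle (mulTerm t (sig tle g)) (sig tle a)

/-- The step witnessed by `g` and `t` is top: `t·lp(‾g) = lp(‾a)`. -/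
def TopWith (a g : Fin m → MvPolynomial (Fin n) K) (t : PP n) : Prop :=
  t + lp ple (bar f g) = lp ple (bar f a)

/-- `a` s-reduces to `b` modulo `G` in one step. -/
def SigRedStep (G : Set (Fin m → MvPolynomial (Fin n) K))
    (a b : Fin m → MvPolynomial (Fin n) K) : Prop :=
  ∃ g t, RedStepWith f ple tle G a b g t

/-- `a` regular s-reduces to `b` modulo `G` in one step. -/
def RegRedStep (G : Set (Fin m → MvPolynomial (Fin n) K))
    (a b : Fin m → MvPolynomial (Fin n) K) : Prop :=
  ∃ g t, RedStepWith f ple tle G a b g t ∧ RegularWith tle a g t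

/-- `a` regular top s-reduces to `b` modulo `G` in one step. -/
def RegTopRedStep (G : Set (Fin m → MvPolynomial (Fin n) K))
    (a b : Fin m → MvPolynomial (Fin n) K) : Prop :=
  ∃ g t, RedStepWith f ple tle G a b g t ∧ RegularWith tle a g t ∧ TopWith f ple a g t

/-- `a` is regular s-irreducible modulo `G`. -/
def RegIrred (G : Set (Fin m → MvPolynomial (Fin n) K))
    (a : Fin m → MvPolynomial (Fin n) K) : Prop :=
  ∀ b, ¬ RegRedStep f ple tle G a b

/-- `a` is regular top s-irreducible modulo `G`. -/
def RegTopIrred (G : Set (Fin m → MvPolynomial (Fin n) K))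
    (a : Fin m → MvPolynomial (Fin n) K) : Prop :=
  ∀ b, ¬ RegTopRedStep f ple tle G a b

/-- `a` s-reduces to zero modulo `G`. -/
def SigRedZero (G : Set (Fin m → MvPolynomial (Fin n) K))
    (a : Fin m → MvPolynomial (Fin n) K) : Prop :=
  ∃ b, Relation.ReflTransGen (SigRedStep f ple tle G) a b ∧ bar f b = 0

/-- `a` regular s-reduces to zero modulo `G`. -/
def RegRedZero (G : Set (Fin m → MvPolynomial (Fin n) K))
    (a : Fin m → MvPolynomial (Fin n) K) : Prop :=
  ∃ b, Relation.ReflTransGen (RegRedStep f ple tle G) a b ∧ bar f b = 0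

/-- `G` is a signature Gröbner basis in the term `u`. -/
def IsSigGBIn (G : Set (Fin m → MvPolynomial (Fin n) K)) (u : Term n m) : Prop :=
  ∀ a : Fin m → MvPolynomial (Fin n) K, a ≠ 0 → sig tle a = u → SigRedZero f ple tle G a

/-- `G` is a signature Gröbner basis up to the term `u`. -/
def IsSigGBUpto (G : Set (Fin m → MvPolynomial (Fin n) K)) (u : Term n m) : Prop :=
  ∀ v, strict tle v u → IsSigGBIn f ple tle G v

/-- `u` is a syzygy signature. -/
def IsSyzSig (u : Term n m) : Prop :=
  ∃ a : Fin m → MvPolynomial (Fin n) K, a ≠ 0 ∧ sig tle a = u ∧ bar f a = 0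

/-- The sig-poly-pair `(𝔰(a), ‾a)` of a module element `a`. -/
noncomputable def sppOf (a : Fin m → MvPolynomial (Fin n) K) :
    Term n m × MvPolynomial (Fin n) K :=
  (sig tle a, bar f a)

/-- `x` is a sig-poly-pair. -/
def IsSPP (x : Term n m × MvPolynomial (Fin n) K) : Prop :=
  ∃ a : Fin m → MvPolynomial (Fin n) K, a ≠ 0 ∧ sppOf f tle a = x

/-- `ro` is a rewrite order. -/
def IsRewriteOrder
    (ro : Term n m × MvPolynomial (Fin n) K → Term n m × MvPolynomial (Fin n) K → Prop) :
    Prop :=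
  (∀ x, IsSPP f tle x → ro x x) ∧
  (∀ x y z, IsSPP f tle x → IsSPP f tle y → IsSPP f tle z → ro x y → ro y z → ro x z) ∧
  (∀ x y, IsSPP f tle x → IsSPP f tle y → (ro x y ∨ ro y x)) ∧
  (∀ x y, IsSPP f tle x → IsSPP f tle y → ro x y → ro y x → x.1 = y.1) ∧
  (∀ (G : Set (Fin m → MvPolynomial (Fin n) K)) (a b : Fin m → MvPolynomial (Fin n) K),
    IsSigGBUpto f ple tle G (sig tle b) → a ∈ G → b ∈ G → a ≠ 0 → b ≠ 0 →
    termDvd (sig tle a) (sig tle b) → RegTopIrred f ple tle G b →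
    ro (sppOf f tle a) (sppOf f tle b))

/-- `a` is a canonical rewriter in the term `u` w.r.t. `G` (for the rewrite order `ro`). -/
def IsCanonRewriter
    (ro : Term n m × MvPolynomial (Fin n) K → Term n m × MvPolynomial (Fin n) K → Prop)
    (G : Set (Fin m → MvPolynomial (Fin n) K)) (u : Term n m)
    (a : Fin m → MvPolynomial (Fin n) K) : Prop :=
  a ∈ G ∧ a ≠ 0 ∧ termDvd (sig tle a) u ∧
    ∀ g ∈ G, g ≠ 0 → termDvd (sig tle g) u → ro (sppOf f tle g) (sppOf f tle a)

/-- `G` is a rewrite basis in the term `u` (for the rewrite order `ro`). -/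
def IsRBIn
    (ro : Term n m × MvPolynomial (Fin n) K → Term n m × MvPolynomial (Fin n) K → Prop)
    (G : Set (Fin m → MvPolynomial (Fin n) K)) (u : Term n m) : Prop :=
  IsSyzSig f tle u ∨
    ∃ g, IsCanonRewriter f tle ro G u g ∧
      RegTopIrred f ple tle G (monomMul (1 : K) (u.1 - (sig tle g).1) g)

/-- `G` is a rewrite basis up to the term `u` (for the rewrite order `ro`). -/
def IsRBUpto
    (ro : Term n m × MvPolynomial (Fin n) K → Term n m × MvPolynomial (Fin n) K → Prop)
    (G : Set (Fin m → MvPolynomial (Fin n) K)) (u : Term n m) : Prop :=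
  ∀ v, strict tle v u → IsRBIn f ple tle ro G v

/-- The S-pair of two module elements. -/
noncomputable def spair (a b : Fin m → MvPolynomial (Fin n) K) :
    Fin m → MvPolynomial (Fin n) K :=
  monomMul ((1 : K) / lc ple (bar f a))
      (lcmPP (lp ple (bar f a)) (lp ple (bar f b)) - lp ple (bar f a)) a -
    monomMul ((1 : K) / lc ple (bar f b))
      (lcmPP (lp ple (bar f a)) (lp ple (bar f b)) - lp ple (bar f b)) b

/-- `a` and `b` give rise to a regular S-pair. -/
def IsRegularSPair (a b : Fin m → MvPolynomial (Fin n) K) : Prop :=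
  bar f a ≠ 0 ∧ bar f b ≠ 0 ∧
    mulTerm (lcmPP (lp ple (bar f a)) (lp ple (bar f b)) - lp ple (bar f a)) (sig tle a) ≠
      mulTerm (lcmPP (lp ple (bar f a)) (lp ple (bar f b)) - lp ple (bar f b)) (sig tle b)

/-- `B` is a Gröbner basis of the ideal `I` w.r.t. `ple`. -/
def IsGroebnerBasis (B : Set (MvPolynomial (Fin n) K)) (I : Ideal (MvPolynomial (Fin n) K)) :
    Prop :=
  (∀ b ∈ B, b ∈ I) ∧ Ideal.span B = I ∧
    ∀ p ∈ I, p ≠ 0 → ∃ b ∈ B, b ≠ 0 ∧ ∃ t : PP n, lp ple p = t + lp ple b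

/-- One step of ordinary polynomial reduction of `p` to `q` modulo `B`. -/
def PolyRedStep (B : Set (MvPolynomial (Fin n) K)) (p q : MvPolynomial (Fin n) K) : Prop :=
  ∃ r ∈ B, r ≠ 0 ∧ ∃ t : PP n, MvPolynomial.coeff (t + lp ple r) p ≠ 0 ∧
    q = p - MvPolynomial.monomial t (MvPolynomial.coeff (t + lp ple r) p / lc ple r) * r

theorem exists_greatest_of_total {α : Type*} (r : α → α → Prop) (hrefl : ∀ x, r x x)
    (htrans : ∀ x y z, r x y → r y z → r x z) (htotal : ∀ x y, r x y ∨ r y x)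
    {s : Finset α} (hs : s.Nonempty) : ∃ x ∈ s, ∀ y ∈ s, r y x := by
  induction hs using Finset.Nonempty.cons_induction with
  | singleton x => exact ⟨x, by simp, by simpa using hrefl x⟩
  | cons x s hx hs ih =>
    obtain ⟨z, hz, hmax⟩ := ih
    rcases htotal x z with h | h
    · exact ⟨z, by simp [hz], by simpa using ⟨h, hmax⟩⟩
    · exact ⟨x, by simp, by simpa using ⟨hrefl x, fun y hy => htrans _ _ _ (hmax y hy) h⟩⟩

section Leading

variable {f ple tle}

theorem finite_setOf_coeffM_ne_zero (a : Fin m → MvPolynomial (Fin n) K) :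
    {u | coeffM a u ≠ 0}.Finite := by
  classical
  refine (Finset.finite_toSet
    (Finset.univ.biUnion fun i => (a i).support.image fun t => (t, i))).subset ?_
  rintro ⟨t, i⟩ h
  simpa [coeffM] using h

theorem lp_isGreatest (hord : OrdersOK ple tle) {p : MvPolynomial (Fin n) K} (hp : p ≠ 0) :
    p.coeff (lp ple p) ≠ 0 ∧ ∀ s, p.coeff s ≠ 0 → ple s (lp ple p) := by
  have h : ∃ t, p.coeff t ≠ 0 ∧ ∀ s, p.coeff s ≠ 0 → ple s t := by
    simpa only [MvPolynomial.mem_support_iff] using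
      exists_greatest_of_total ple hord.ple_refl hord.ple_trans hord.ple_total
        (MvPolynomial.support_nonempty.mpr hp)
  rw [lp, dif_pos h]
  exact h.choose_spec

theorem sig_isGreatest (hord : OrdersOK ple tle) {a : Fin m → MvPolynomial (Fin n) K}
    {u : Term n m} (hu : coeffM a u ≠ 0) :
    coeffM a (sig tle a) ≠ 0 ∧ ∀ v, coeffM a v ≠ 0 → tle v (sig tle a) := by
  have h : ∃ u, coeffM a u ≠ 0 ∧ ∀ v, coeffM a v ≠ 0 → tle v u := by
    simpa using exists_greatest_of_total tle hord.tle_refl hord.tle_trans hord.tle_total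
      (s := (finite_setOf_coeffM_ne_zero a).toFinset) ⟨u, by simpa using hu⟩
  rw [sig, dif_pos h]
  exact h.choose_spec

theorem exists_coeffM_ne_zero {a : Fin m → MvPolynomial (Fin n) K} (ha : a ≠ 0) :
    ∃ u, coeffM a u ≠ 0 := by
  obtain ⟨i, hi⟩ := Function.ne_iff.mp ha
  obtain ⟨t, ht⟩ := MvPolynomial.ne_zero_iff.mp hi
  exact ⟨(t, i), ht⟩

theorem sig_le_of_forall (hord : OrdersOK ple tle) {a : Fin m → MvPolynomial (Fin n) K}
    {w : Term n m} (h : ∀ v, coeffM a v ≠ 0 → tle v w) : tle (sig tle a) w := by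
  unfold sig
  split_ifs with hex
  · exact h _ hex.choose_spec.1
  · exact hord.tle_compat _ _ _ _ (hord.ple_one_le _) (Fin.zero_le _)

theorem bar_sub (a b : Fin m → MvPolynomial (Fin n) K) : bar f (a - b) = bar f a - bar f b := by
  simp [bar, sub_mul]

theorem bar_monomMul (c : K) (t : PP n) (a : Fin m → MvPolynomial (Fin n) K) :
    bar f (monomMul c t a) = MvPolynomial.monomial t c * bar f a := by
  simp [bar, monomMul, Finset.mul_sum, mul_assoc]

theorem coeff_ne_zero_of_coeff_monomial_mul {t s : PP n} {c : K} {p : MvPolynomial (Fin n) K}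
    (h : (MvPolynomial.monomial t c * p).coeff s ≠ 0) : ∃ r, s = t + r ∧ p.coeff r ≠ 0 := by
  rw [MvPolynomial.coeff_monomial_mul'] at h
  split_ifs at h with hts
  · exact ⟨s - t, (add_tsub_cancel_of_le hts).symm, right_ne_zero_of_mul h⟩
  · exact absurd rfl h

theorem sig_le_of_redStepWith (hord : OrdersOK ple tle)
    {G : Set (Fin m → MvPolynomial (Fin n) K)} {a b g : Fin m → MvPolynomial (Fin n) K} {t : PP n}
    (h : RedStepWith f ple tle G a b g t) : tle (sig tle b) (sig tle a) := by
  obtain ⟨-, -, -, rfl, hle⟩ := h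
  refine sig_le_of_forall hord fun v hv => ?_
  by_cases hav : coeffM a v = 0
  · have hg : coeffM (monomMul ((bar f a).coeff (t + lp ple (bar f g)) / lc ple (bar f g)) t g) v
        ≠ 0 := fun h0 => hv (by simp_all [coeffM])
    obtain ⟨r, hr, hgr⟩ := coeff_ne_zero_of_coeff_monomial_mul hg
    have hgr' : coeffM g (r, v.2) ≠ 0 := hgr
    have hvr : v = mulTerm t (r, v.2) := Prod.ext hr rfl
    rw [hvr]
    exact hord.tle_trans _ _ _ (hord.tle_mul _ _ _ ((sig_isGreatest hord hgr').2 _ hgr')) hle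
  · exact (sig_isGreatest hord hav).2 v hav

/-- If `a` s-reduces to zero, then the leading power-product of `‾a` is s-reducible. -/
theorem SigRedZero.exists_dvd_leading (hord : OrdersOK ple tle)
    {G : Set (Fin m → MvPolynomial (Fin n) K)} {a : Fin m → MvPolynomial (Fin n) K}
    (h : SigRedZero f ple tle G a) {s : PP n} (hs : (bar f a).coeff s ≠ 0)
    (hmax : ∀ r, (bar f a).coeff r ≠ 0 → ple r s) :
    ∃ g ∈ G, bar f g ≠ 0 ∧ ∃ t, t + lp ple (bar f g) = s ∧
      tle (mulTerm t (sig tle g)) (sig tle a) := by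
  obtain ⟨z, hz, hz0⟩ := h
  induction hz using Relation.ReflTransGen.head_induction_on with
  | refl => simp [hz0] at hs
  | @head x y hxy _ ih =>
    obtain ⟨g, t, hstep⟩ := hxy
    have hsig := sig_le_of_redStepWith hord hstep
    obtain ⟨hgG, hg, hcoeff, rfl, hle⟩ := hstep
    by_cases heq : t + lp ple (bar f g) = s
    · exact ⟨g, hgG, hg, t, heq, hle⟩
    have hts : ple (t + lp ple (bar f g)) s := hmax _ hcoeff
    have hsupp (c : K) (r : PP n) (hr : (MvPolynomial.monomial t c * bar f g).coeff r ≠ 0) :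
        ple r (t + lp ple (bar f g)) := by
      obtain ⟨q, rfl, hq⟩ := coeff_ne_zero_of_coeff_monomial_mul hr
      exact hord.ple_mul _ _ _ ((lp_isGreatest hord hg).2 q hq)
    simp only [bar_sub, bar_monomMul, MvPolynomial.coeff_sub] at ih
    obtain ⟨g', hg'G, hg', t', ht', hle'⟩ := ih
      (by
        rwa [not_ne_iff.mp fun hne => heq (hord.ple_antisymm _ _ hts (hsupp _ s hne)), sub_zero])
      (fun r hr => by
        by_cases hxr : (bar f x).coeff r = 0
        · rw [hxr, zero_sub, neg_ne_zero] at hr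
          exact hord.ple_trans _ _ _ (hsupp _ r hr) hts
        · exact hmax r hxr)
    exact ⟨g', hg'G, hg', t', ht', hord.tle_trans _ _ _ hle' hsig⟩

theorem sig_sub_strict (hord : OrdersOK ple tle) {a b : Fin m → MvPolynomial (Fin n) K}
    (ha : a ≠ 0) (hb : b ≠ 0) (hsig : sig tle a = sig tle b) (hlc : lcM tle a = lcM tle b)
    (hne : a - b ≠ 0) : strict tle (sig tle (a - b)) (sig tle a) := by
  obtain ⟨u, hu⟩ := exists_coeffM_ne_zero ha
  obtain ⟨v, hv⟩ := exists_coeffM_ne_zero hb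
  obtain ⟨w, hw⟩ := exists_coeffM_ne_zero hne
  have hcoeff (x : Term n m) : coeffM (a - b) x = coeffM a x - coeffM b x := by simp [coeffM]
  refine ⟨sig_le_of_forall hord fun x hx => ?_, fun heq => (sig_isGreatest hord hw).1 ?_⟩
  · by_cases hax : coeffM a x = 0
    · rw [hsig]
      exact (sig_isGreatest hord hv).2 x fun hbx => hx (by rw [hcoeff, hax, hbx, sub_zero])
    · exact (sig_isGreatest hord hu).2 x hax
  · rw [lcM, lcM, ← hsig] at hlc
    rw [heq, hcoeff, hlc, sub_self]

theorem RegIrred.coeff_eq_zero {G : Set (Fin m → MvPolynomial (Fin n) K)}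
    {a g : Fin m → MvPolynomial (Fin n) K} (h : RegIrred f ple tle G a) (hgG : g ∈ G)
    (hg : bar f g ≠ 0) {t : PP n} (ht : strict tle (mulTerm t (sig tle g)) (sig tle a)) :
    (bar f a).coeff (t + lp ple (bar f g)) = 0 :=
  not_ne_iff.mp fun hne => h _ ⟨g, t, ⟨hgG, hg, hne, rfl, ht.1⟩, ht⟩

end Leading

/-- uniqueness of `‾a` for regular s-irreducible elements with equal
signatures and leading coefficients. -/
theorem reg_irred_unique (hord : OrdersOK ple tle)
    (G : Set (Fin m → MvPolynomial (Fin n) K))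
    (a b : Fin m → MvPolynomial (Fin n) K) (ha : a ≠ 0) (hb : b ≠ 0)
    (hsig : sig tle a = sig tle b) (hlc : lcM tle a = lcM tle b)
    (hGB : IsSigGBUpto f ple tle G (sig tle a))
    (hirra : RegIrred f ple tle G a) (hirrb : RegIrred f ple tle G b) :
    bar f a = bar f b := by
  by_contra hne
  have hbar : bar f (a - b) ≠ 0 := by rwa [bar_sub, sub_ne_zero]
  have hab : a - b ≠ 0 := by
    rw [sub_ne_zero]
    rintro rfl
    exact hne rfl
  have hlt := sig_sub_strict hord ha hb hsig hlc hab
  obtain ⟨hs, hmax⟩ := lp_isGreatest hord hbar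
  obtain ⟨g, hgG, hg, t, ht, hle⟩ :=
    (hGB _ hlt (a - b) hab rfl).exists_dvd_leading hord hs hmax
  have hreg : strict tle (mulTerm t (sig tle g)) (sig tle a) :=
    ⟨hord.tle_trans _ _ _ hle hlt.1, fun heq =>
      hlt.2 (hord.tle_antisymm _ _ hlt.1 (heq ▸ hle))⟩
  apply hs
  rw [← ht, bar_sub, MvPolynomial.coeff_sub, hirra.coeff_eq_zero hgG hg hreg,
    hirrb.coeff_eq_zero hgG hg (hsig ▸ hreg), sub_zero]

end

end SigGB
end

section
/- (Syzygy criterion) Let a ∈ R^m be nonzero and let G ⊆ R^m be a signature Gröbner basis up to 𝔰(a). If 𝔰(a) is a syzygy signature, then a regular s-reduces to zero modulo G, i.e., there is a finite sequence of regular s-reduction steps leading from a to some b with ‾b = 0. -/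
namespace SigGB

noncomputable section

variable {K : Type*} [Field K] {n m : ℕ} [NeZero m]

variable (f : Fin m → MvPolynomial (Fin n) K)
variable (ple : PP n → PP n → Prop)
variable (tle : Term n m → Term n m → Prop)

theorem bar_sub_monomMul {m : ℕ} (f a g : Fin m → MvPolynomial (Fin n) K) (c : K) (t : PP n) :
    bar f (a - monomMul c t g) = bar f a - MvPolynomial.monomial t c * bar f g := by
  simp only [bar, monomMul, Pi.sub_apply, sub_mul, Finset.sum_sub_distrib, Finset.mul_sum,
    mul_assoc]

theorem coeffM_sub {m : ℕ} (a b : Fin m → MvPolynomial (Fin n) K) (u : Term n m) :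
    coeffM (a - b) u = coeffM a u - coeffM b u := by
  simp [coeffM]

variable {f ple tle}

/-- The signature of a nonzero element is the largest term of its support. -/
theorem sig_spec (hord : OrdersOK ple tle) {a : Fin m → MvPolynomial (Fin n) K} (ha : a ≠ 0) :
    coeffM a (sig tle a) ≠ 0 ∧ ∀ v, coeffM a v ≠ 0 → tle v (sig tle a) := by
  have hex : ∃ u, coeffM a u ≠ 0 ∧ ∀ v, coeffM a v ≠ 0 → tle v u := by
    have htrans : IsTrans (Term n m) tle := ⟨hord.tle_trans⟩
    have hfin : {u : Term n m | coeffM a u ≠ 0}.Finite := by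
      refine (Set.finite_iUnion fun i : Fin m =>
        (a i).support.finite_toSet.image fun t => (t, i)).subset fun u hu => ?_
      exact Set.mem_iUnion.2 ⟨u.2, u.1, by simpa [coeffM] using hu, rfl⟩
    obtain ⟨i, hi⟩ := Function.ne_iff.1 ha
    obtain ⟨t, ht⟩ := MvPolynomial.ne_zero_iff.1 hi
    obtain ⟨u, hu, hmax⟩ :=
      @Set.Finite.exists_maximal _ ⟨tle⟩ htrans _ hfin ⟨(t, i), ht⟩
    exact ⟨u, hu, fun v hv => (hord.tle_total v u).elim id fun h => hmax hv h⟩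
  rw [sig, dif_pos hex]
  exact hex.choose_spec

theorem sig_eq_of_isGreatest (hord : OrdersOK ple tle) {a : Fin m → MvPolynomial (Fin n) K}
    {u : Term n m} (hu : coeffM a u ≠ 0) (hmax : ∀ v, coeffM a v ≠ 0 → tle v u) :
    sig tle a = u := by
  have ha : a ≠ 0 := by
    rintro rfl
    simp [coeffM] at hu
  have h := sig_spec hord ha
  exact hord.tle_antisymm _ _ (hmax _ h.1) (h.2 _ hu)

theorem strict_of_tle_of_strict {n m : ℕ} {ple : PP n → PP n → Prop}
    {tle : Term n m → Term n m → Prop} (hord : OrdersOK ple tle) {u v w : Term n m}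
    (huv : tle u v) (hvw : strict tle v w) : strict tle u w := by
  refine ⟨hord.tle_trans _ _ _ huv hvw.1, ?_⟩
  rintro rfl
  exact hvw.2 (hord.tle_antisymm _ _ hvw.1 huv)

/-- The support of a monomial multiple of `g` is bounded by the multiple of the signature. -/
theorem tle_of_coeffM_monomMul_ne_zero (hord : OrdersOK ple tle)
    {g : Fin m → MvPolynomial (Fin n) K} {c : K} {t : PP n} {v : Term n m}
    (hv : coeffM (monomMul c t g) v ≠ 0) : tle v (mulTerm t (sig tle g)) := by
  rw [coeffM, monomMul, MvPolynomial.coeff_monomial_mul'] at hv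
  split_ifs at hv with htv
  · have hg : coeffM g (v.1 - t, v.2) ≠ 0 := right_ne_zero_of_mul hv
    have hg0 : g ≠ 0 := by
      rintro rfl
      simp [coeffM] at hg
    have h := hord.tle_mul t _ _ ((sig_spec hord hg0).2 _ hg)
    rwa [mulTerm, add_tsub_cancel_of_le htv] at h
  · exact absurd rfl hv

/-- Subtracting a multiple of smaller signature does not change the signature. -/
theorem sig_sub_monomMul (hord : OrdersOK ple tle) {a g : Fin m → MvPolynomial (Fin n) K}
    {c : K} {t : PP n} (ha : a ≠ 0) (h : RegularWith tle a g t) :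
    a - monomMul c t g ≠ 0 ∧ sig tle (a - monomMul c t g) = sig tle a := by
  have hsmall : coeffM (monomMul c t g) (sig tle a) = 0 := by
    by_contra hne
    exact h.2 (hord.tle_antisymm _ _ h.1 (tle_of_coeffM_monomMul_ne_zero hord hne))
  have hne : coeffM (a - monomMul c t g) (sig tle a) ≠ 0 := by
    rw [coeffM_sub, hsmall, sub_zero]
    exact (sig_spec hord ha).1
  refine ⟨fun h0 => hne (by rw [h0]; simp [coeffM]), sig_eq_of_isGreatest hord hne fun v hv => ?_⟩
  by_cases hav : coeffM a v = 0
  · rw [coeffM_sub, hav, zero_sub, neg_ne_zero] at hv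
    exact hord.tle_trans _ _ _ (tle_of_coeffM_monomMul_ne_zero hord hv) h.1
  · exact (sig_spec hord ha).2 v hav

/-- An s-reduction of `c` can be replayed as a regular s-reduction of any element with the same
polynomial part and larger signature. -/
theorem exists_regular_reduction_of_reduction (hord : OrdersOK ple tle)
    {G : Set (Fin m → MvPolynomial (Fin n) K)} {c d : Fin m → MvPolynomial (Fin n) K}
    (hcd : Relation.ReflTransGen (SigRedStep f ple tle G) c d) :
    ∀ a : Fin m → MvPolynomial (Fin n) K, a ≠ 0 → bar f a = bar f c →
      (c ≠ 0 → strict tle (sig tle c) (sig tle a)) →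
      ∃ b, Relation.ReflTransGen (RegRedStep f ple tle G) a b ∧ bar f b = bar f d := by
  induction hcd using Relation.ReflTransGen.head_induction_on with
  | refl => exact fun a _ hbar _ => ⟨a, .refl, hbar⟩
  | @head c c' hstep _ ih =>
    intro a ha hbar hsig
    obtain ⟨g, t, hgG, hg, hcoeff, rfl, hle⟩ := hstep
    have hc : c ≠ 0 := by
      rintro rfl
      exact hcoeff (by simp [bar])
    have hreg : RegularWith tle a g t := strict_of_tle_of_strict hord hle (hsig hc)
    set k := MvPolynomial.coeff (t + lp ple (bar f g)) (bar f c) / lc ple (bar f g)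
    obtain ⟨ha', hsig'⟩ := sig_sub_monomMul (c := k) hord ha hreg
    obtain ⟨b, hab, hb⟩ := ih (a - monomMul k t g) ha'
      (by rw [bar_sub_monomMul, bar_sub_monomMul, hbar]) fun hc' => by
        rw [hsig']
        refine strict_of_tle_of_strict hord ?_ (hsig hc)
        have hne := (sig_spec hord hc').1
        by_cases hcv : coeffM c (sig tle (c - monomMul k t g)) = 0
        · rw [coeffM_sub, hcv, zero_sub, neg_ne_zero] at hne
          exact hord.tle_trans _ _ _ (tle_of_coeffM_monomMul_ne_zero hord hne) hle
        · exact (sig_spec hord hc).2 _ hcv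
    exact ⟨b, .head ⟨g, t, ⟨hgG, hg, hbar ▸ hcoeff, by rw [hbar], hreg.1⟩, hreg⟩ hab, hb⟩

variable (f ple tle)

/-- syzygy criterion: if `𝔰(a)` is a syzygy signature and `G` is a
signature Gröbner basis up to `𝔰(a)`, then `a` regular s-reduces to zero modulo `G`. -/
theorem syzygy_criterion (hord : OrdersOK ple tle)
    (G : Set (Fin m → MvPolynomial (Fin n) K))
    (a : Fin m → MvPolynomial (Fin n) K) (ha : a ≠ 0)
    (hGB : IsSigGBUpto f ple tle G (sig tle a))
    (hsyz : IsSyzSig f tle (sig tle a)) :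
    RegRedZero f ple tle G a := by
  obtain ⟨z, hz, hza, hz0⟩ := hsyz
  have hza' : coeffM z (sig tle a) ≠ 0 := hza ▸ (sig_spec hord hz).1
  set k := coeffM a (sig tle a) / coeffM z (sig tle a) with hk
  set c := a - monomMul k 0 z with hc
  have hcoeff (v : Term n m) : coeffM c v = coeffM a v - k * coeffM z v := by
    rw [hc, coeffM_sub]
    simp [coeffM, monomMul, MvPolynomial.coeff_C_mul, ← MvPolynomial.C_apply]
  have hbar : bar f c = bar f a := by rw [hc, bar_sub_monomMul, hz0, mul_zero, sub_zero]
  by_cases hc0 : c = 0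
  · exact ⟨a, .refl, by rw [← hbar, hc0]; simp [bar]⟩
  have hsig : strict tle (sig tle c) (sig tle a) := by
    have hne := (sig_spec hord hc0).1
    refine ⟨?_, fun h => hne ?_⟩
    · by_cases hav : coeffM a (sig tle c) = 0
      · rw [hcoeff, hav, zero_sub, neg_ne_zero] at hne
        exact hza ▸ (sig_spec hord hz).2 _ (right_ne_zero_of_mul hne)
      · exact (sig_spec hord ha).2 _ hav
    · rw [h, hcoeff, hk, div_mul_cancel₀ _ hza', sub_self]
  obtain ⟨d, hcd, hd⟩ := hGB _ hsig c hc0 rfl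
  obtain ⟨b, hab, hb⟩ :=
    exists_regular_reduction_of_reduction hord hcd a ha hbar.symm fun _ => hsig
  exact ⟨b, hab, hb.trans hd⟩

end

end SigGB
end
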